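/- Let A be any real 3×3 matrix and let g : ℝ → M₃(ℝ), Ω : ℝ → ℝ³, x : ℝ → ℝ³ be smooth with: g(t)ᵀ·g(t) = E and g'(t) = g(t)·hat(Ω(t)) for all t (rigid body kinematics); x'(t) = r·A·g(t)·Ω(t) (the generalized rolling constraint); p(t) := m·x'(t); and suppose the Lagrange–D'Alembert equations hold with multiplier μ(t) := p'(t), i.e. 𝕀·Ω'(t) = (𝕀·Ω(t))×Ω(t) − r·g(t)ᵀ·Aᵀ·p'(t) for all t. Then the multiplier is determined by μ(t) = m·r·A·g(t)·Ω'(t), and consequently the rotational equation decouples as 𝕀·Ω'(t) = (𝕀·Ω(t))×Ω(t) − m·r²·g(t)ᵀ·Aᵀ·A·g(t)·Ω'(t) for all t. -/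

import Mathlib

/-!
Differentiating `p = m r A g Ω` by the product rule gives `m r A (g' Ω + g Ω')`. Since
`g' Ω = g (hat Ω) Ω = g (Ω × Ω) = 0`, only `m r A g Ω'` survives, and uniqueness of derivatives
identifies it with the multiplier. The decoupled equation is then obtained by substitution.
-/

open Matrix

noncomputable section

/-- `ℝ³`. -/
abbrev R3 : Type := Fin 3 → ℝ

/-- The hat map: `hat(η) v = η × v`. -/
def hat (η : R3) : Matrix (Fin 3) (Fin 3) ℝ :=
  !![0, -η 2, η 1; η 2, 0, -η 0; -η 1, η 0, 0]

/-- The inertia tensor `𝕀 = diag(I₁,I₂,I₃)`. -/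
def Imat (I1 I2 I3 : ℝ) : Matrix (Fin 3) (Fin 3) ℝ := Matrix.diagonal ![I1, I2, I3]

/-- In vector form, `η × η = 0`. -/
lemma hat_mulVec_self (η : R3) : hat η *ᵥ η = 0 := by
  ext i
  fin_cases i <;> simp [hat, Matrix.mulVec, dotProduct, Fin.sum_univ_three] <;> ring

/-- The product rule for `g Ω`: the term coming from `g'` vanishes because the angular velocity
is parallel to itself. -/
lemma hasDerivAt_mulVec_angular (g : ℝ → Matrix (Fin 3) (Fin 3) ℝ) (Ω Ωd : ℝ → R3) (t : ℝ)
    (hg : ∀ i j, HasDerivAt (fun s => g s i j) ((g t * hat (Ω t)) i j) t)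
    (hΩ : ∀ i, HasDerivAt (fun s => Ω s i) (Ωd t i) t) :
    HasDerivAt (fun s => g s *ᵥ Ω s) (g t *ᵥ Ωd t) t := by
  rw [hasDerivAt_pi]
  intro k
  have h := HasDerivAt.fun_sum (u := Finset.univ) fun j _ => (hg k j).fun_mul (hΩ j)
  have e : ∑ j, (g t * hat (Ω t)) k j * Ω t j = 0 := by
    change ((g t * hat (Ω t)) *ᵥ Ω t) k = 0
    rw [← Matrix.mulVec_mulVec, hat_mulVec_self, Matrix.mulVec_zero, Pi.zero_apply]
  rw [Finset.sum_add_distrib, e, zero_add] at h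
  exact h

/-- For a rigid body subject to the generalized rolling constraint
`x' = r A g Ω`, the Lagrange–D'Alembert equations with multiplier `μ = p'`
(where `p = m x'`) determine the multiplier as `μ = m r A g Ω'`, so the
rotational equation decouples as
`𝕀 Ω' = (𝕀 Ω) × Ω − m r² gᵀ Aᵀ A g Ω'`. -/
theorem stmt15 (m r I1 I2 I3 : ℝ) (hm : 0 < m) (hr : 0 < r)
    (h1 : 0 < I1) (h2 : 0 < I2) (h3 : 0 < I3)
    (A : Matrix (Fin 3) (Fin 3) ℝ)
    (g : ℝ → Matrix (Fin 3) (Fin 3) ℝ) (Ω Ωd x μ : ℝ → R3)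
    (horth : ∀ t, (g t)ᵀ * g t = 1)
    (hg : ∀ t i j, HasDerivAt (fun s => g s i j) ((g t * hat (Ω t)) i j) t)
    (hΩ : ∀ t i, HasDerivAt (fun s => Ω s i) (Ωd t i) t)
    (hx : ∀ t i, HasDerivAt (fun s => x s i) ((r • ((A * g t) *ᵥ Ω t)) i) t)
    (hμ : ∀ t i, HasDerivAt (fun s => (m • (r • ((A * g s) *ᵥ Ω s))) i) (μ t i) t)
    (hLD : ∀ t, Imat I1 I2 I3 *ᵥ Ωd t =
      crossProduct (Imat I1 I2 I3 *ᵥ Ω t) (Ω t) - r • (((g t)ᵀ * Aᵀ) *ᵥ μ t)) :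
    (∀ t, μ t = (m * r) • ((A * g t) *ᵥ Ωd t)) ∧
    (∀ t, Imat I1 I2 I3 *ᵥ Ωd t =
      crossProduct (Imat I1 I2 I3 *ᵥ Ω t) (Ω t) -
        (m * r^2) • (((g t)ᵀ * Aᵀ * A * g t) *ᵥ Ωd t)) := by
  have key : ∀ t, μ t = (m * r) • ((A * g t) *ᵥ Ωd t) := by
    intro t
    ext i
    have h := hasDerivAt_pi.1 (hasDerivAt_mulVec_angular g Ω Ωd t (hg t) (hΩ t))
    have h' := (HasDerivAt.fun_sum (u := Finset.univ)
      fun k _ => (h k).const_mul (A i k)).const_mul (m * r)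
    refine (hμ t i).unique ?_
    simp only [smul_smul, ← Matrix.mulVec_mulVec]
    exact h'
  refine ⟨key, fun t => ?_⟩
  rw [hLD t, key t]
  simp only [Matrix.mulVec_smul, smul_smul, Matrix.mulVec_mulVec, Matrix.mul_assoc]
  congr 2
  ring

end
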